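/- arXiv:2409.10657 — 3 statements merged into one kernel-verified Lean document; each statement's English description precedes it below -/
import Mathlib

section
/- Let S ⊆ ℝⁿ be a safe region of attraction within X and let T = f⁻¹(S) ∩ X. Then S ⊆ T, and T is also a safe region of attraction within X. -/
/-!
Invariance of `S` and `S ⊆ D` give `S ⊆ T = f ⁻¹' S ∩ X`, so `0` is interior to `T`, and
`f '' T ⊆ S ⊆ T`. The orbit of a point of `T` starts in `X` and continues as the orbit of a point
of `S ⊆ D`; prepending one term changes neither safety nor the limit, hence `T ⊆ D`.
-/

/-- the state-constrained preimage of a safe region of attraction contains it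
and is itself a safe region of attraction. -/
theorem stmt_2 {n : ℕ} (f : (Fin n → ℝ) → (Fin n → ℝ)) (X : Set (Fin n → ℝ))
    (hf0 : f 0 = 0) (hX0 : (0 : Fin n → ℝ) ∈ interior X)
    (D : Set (Fin n → ℝ))
    (hD : D = {x : Fin n → ℝ | (∀ k : ℕ, f^[k] x ∈ X) ∧
      Filter.Tendsto (fun k : ℕ => f^[k] x) Filter.atTop (nhds 0)})
    (hD0 : (0 : Fin n → ℝ) ∈ interior D)
    (S : Set (Fin n → ℝ))
    (hS : S ⊆ D ∧ (0 : Fin n → ℝ) ∈ interior S ∧ f '' S ⊆ S)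
    (T : Set (Fin n → ℝ)) (hT : T = f ⁻¹' S ∩ X) :
    S ⊆ T ∧ (T ⊆ D ∧ (0 : Fin n → ℝ) ∈ interior T ∧ f '' T ⊆ T) := by
  subst hD hT
  obtain ⟨hSD, hS0, hSf⟩ := hS
  have hST : S ⊆ f ⁻¹' S ∩ X := fun x hx =>
    ⟨hSf (Set.mem_image_of_mem f hx), (hSD hx).1 0⟩
  refine ⟨hST, ?_, interior_mono hST hS0, ?_⟩
  · -- The orbit of `x` is `x ∈ X` followed by the orbit of `f x ∈ S ⊆ D`.
    rintro x ⟨hfx, hxX⟩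
    obtain ⟨hsafe, hlim⟩ := hSD hfx
    refine ⟨fun k => ?_, ?_⟩
    · cases k with
      | zero => exact hxX
      | succ k => exact hsafe k
    · exact (Filter.tendsto_add_atTop_iff_nat 1).1 hlim
  · rintro _ ⟨x, ⟨hfx, -⟩, rfl⟩
    exact hST hfx
end

section
/- Let S ⊆ ℝⁿ be a safe region of attraction within X. Then the safe any-time backward reachable set of S within X equals the safe domain of attraction: R⁻_X(S) = D₀^X. -/
/-- the safe any-time backward reachable set of a safe region of attraction
within `X` equals the safe domain of attraction. -/
theorem stmt_3 {n : ℕ} (f : (Fin n → ℝ) → (Fin n → ℝ)) (X : Set (Fin n → ℝ))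
    (hf0 : f 0 = 0) (hX0 : (0 : Fin n → ℝ) ∈ interior X)
    (D : Set (Fin n → ℝ))
    (hD : D = {x : Fin n → ℝ | (∀ k : ℕ, f^[k] x ∈ X) ∧
      Filter.Tendsto (fun k : ℕ => f^[k] x) Filter.atTop (nhds 0)})
    (hD0 : (0 : Fin n → ℝ) ∈ interior D)
    (S : Set (Fin n → ℝ))
    (hS : S ⊆ D ∧ (0 : Fin n → ℝ) ∈ interior S ∧ f '' S ⊆ S) :
    {x : Fin n → ℝ | ∃ N : ℕ, (∀ k ≤ N, f^[k] x ∈ X) ∧ f^[N] x ∈ S} = D := by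
  obtain ⟨hSD, hS0, -⟩ := hS
  subst hD
  ext x
  constructor
  · rintro ⟨N, hX, hN⟩
    obtain ⟨hsafe, hlim⟩ := hSD hN
    -- The trajectory of `x` from time `N` on is the trajectory of `f^[N] x ∈ S ⊆ D`.
    simp only [← Function.iterate_add_apply] at hsafe hlim
    refine ⟨fun k => ?_, (Filter.tendsto_add_atTop_iff_nat N).1 hlim⟩
    rcases le_total k N with h | h
    · exact hX k h
    · simpa [Nat.sub_add_cancel h] using hsafe (k - N)
  · rintro ⟨hsafe, hlim⟩
    -- `S` is a neighbourhood of `0`, so a trajectory converging to `0` enters it.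
    obtain ⟨N, hN⟩ := (hlim.eventually (mem_interior_iff_mem_nhds.1 hS0)).exists
    exact ⟨N, fun k _ => hsafe k, hN⟩
end

section
/- Let V ⊆ X be a safe region of attraction within X. Define the sequence {V_k}_{k∈ℤ₊} by V₀ = V and V_{k+1} = f⁻¹(V_k) ∩ X for k ∈ ℤ₊. Then: (i) each V_k is a safe region of attraction within X; (ii) V_k ⊆ V_{k+1} for all k ∈ ℤ₊; and (iii) ⋃_{k∈ℤ₊} V_k = D₀^X. -/
/-!
Monotonicity of the sequence is the key: `V ⊆ f⁻¹(V) ∩ X` by forward invariance and `V ⊆ X`, and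
taking preimages preserves the inclusion. Invariance of each `Vk k` then follows from
`Vk k ⊆ Vk (k + 1) ⊆ f⁻¹(Vk k)`, and `0` stays interior since `V ⊆ Vk k`. A point of `X` whose image
lies in `D` lies in `D`, giving `Vk k ⊆ D`. Conversely, a trajectory that converges to `0` enters
the neighbourhood `V` of `0` at some time `N`; having stayed in `X`, it started in `Vk N`.
-/

/-- iterative computation of safe regions of attraction converging to the
safe domain of attraction. -/
theorem stmt_4 {n : ℕ} (f : (Fin n → ℝ) → (Fin n → ℝ)) (X : Set (Fin n → ℝ))
    (hf0 : f 0 = 0) (hX0 : (0 : Fin n → ℝ) ∈ interior X)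
    (D : Set (Fin n → ℝ))
    (hD : D = {x : Fin n → ℝ | (∀ k : ℕ, f^[k] x ∈ X) ∧
      Filter.Tendsto (fun k : ℕ => f^[k] x) Filter.atTop (nhds 0)})
    (hD0 : (0 : Fin n → ℝ) ∈ interior D)
    (V : Set (Fin n → ℝ)) (hVX : V ⊆ X)
    (hV : V ⊆ D ∧ (0 : Fin n → ℝ) ∈ interior V ∧ f '' V ⊆ V)
    (Vk : ℕ → Set (Fin n → ℝ)) (hV0 : Vk 0 = V)
    (hVrec : ∀ k : ℕ, Vk (k + 1) = f ⁻¹' (Vk k) ∩ X) :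
    (∀ k : ℕ, Vk k ⊆ D ∧ (0 : Fin n → ℝ) ∈ interior (Vk k) ∧ f '' (Vk k) ⊆ Vk k) ∧
    (∀ k : ℕ, Vk k ⊆ Vk (k + 1)) ∧
    (⋃ k : ℕ, Vk k) = D := by
  have mono : ∀ k, Vk k ⊆ Vk (k + 1) := by
    intro k
    induction k with
    | zero =>
      rw [hVrec, hV0]
      exact fun x hx => ⟨hV.2.2 ⟨x, hx, rfl⟩, hVX hx⟩
    | succ k ih =>
      rw [hVrec (k + 1), hVrec k]
      rintro x ⟨hx, hxX⟩
      refine ⟨?_, hxX⟩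
      have := ih hx
      rw [hVrec] at this
      exact this
  have hVsub : ∀ k, V ⊆ Vk k := by
    intro k
    rw [← hV0]
    exact monotone_nat_of_le_succ mono (Nat.zero_le k)
  have hsubD : ∀ k, Vk k ⊆ D := by
    intro k
    induction k with
    | zero => rw [hV0]; exact hV.1
    | succ k ih =>
      rw [hVrec]
      rintro x ⟨hx, hxX⟩
      have h := ih hx
      rw [hD] at h ⊢
      refine ⟨fun m => ?_, ?_⟩
      · cases m with
        | zero => exact hxX
        | succ m => exact h.1 m
      · exact (Filter.tendsto_add_atTop_iff_nat (f := fun k : ℕ => f^[k] x) 1).1 h.2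
  have hback : ∀ N x, (∀ m : ℕ, f^[m] x ∈ X) → f^[N] x ∈ V → x ∈ Vk N := by
    intro N
    induction N with
    | zero => intro x _ hx; rw [hV0]; exact hx
    | succ N ih =>
      intro x hX hx
      rw [hVrec]
      exact ⟨ih (f x) (fun m => hX (m + 1)) hx, hX 0⟩
  refine ⟨fun k => ⟨hsubD k, interior_mono (hVsub k) hV.2.1, ?_⟩, mono, ?_⟩
  · rintro _ ⟨x, hx, rfl⟩
    have := mono k hx
    rw [hVrec] at this
    exact this.1
  · refine Set.Subset.antisymm (Set.iUnion_subset hsubD) fun x hx => ?_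
    rw [hD] at hx
    obtain ⟨N, hN⟩ := (hx.2.eventually (mem_interior_iff_mem_nhds.1 hV.2.1)).exists
    exact Set.mem_iUnion.2 ⟨N, hback N x hx.1 hN⟩
end
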